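/- arXiv:2403.20233 — 2 statements merged into one kernel-verified Lean document; each statement's English description precedes it below -/
import Mathlib

section
/- (Functional implicit differentiation.) Assume: (i) for every ω ∈ Ω there exist μ > 0 and a neighborhood of ω on which h ↦ L_in(ω',h) is μ-strongly convex for every ω' in that neighborhood; (ii) h ↦ L_in(ω,h) is finite-valued and Fréchet differentiable on H for every ω; (iii) the map (ω,h) ↦ ∂_h L_in(ω,h) ∈ H is Hadamard differentiable on Ω × H. Then for every ω the minimizer h*_ω of h ↦ L_in(ω,h) over H exists and is unique, the map ω ↦ h*_ω is Fréchet differentiable, and its derivative ∂_ω h*_ω (a bounded linear map H → ℝ^d in adjoint form) satisfies the linear equation B_ω + ∂_ω h*_ω ∘ C_ω = 0, where B_ω := ∂_{ω,h}L_in(ω,h*_ω) (the partial derivative in ω of ∂_h L_in at (ω,h*_ω)) and C_ω := ∂²_h L_in(ω,h*_ω) (the partial derivative in h of ∂_h L_in at (ω,h*_ω)). -/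
open Filter Topology

/-- Hadamard differentiability of `L` at `a` with differential `D`. -/
def HadamardDiffAt {A B : Type*} [NormedAddCommGroup A] [NormedSpace ℝ A]
    [NormedAddCommGroup B] [NormedSpace ℝ B] (L : A → B) (a : A) (D : A →L[ℝ] B) : Prop :=
  ∀ (u : ℕ → A) (ulim : A) (t : ℕ → ℝ),
    Tendsto u atTop (nhds ulim) → (∀ n, t n ≠ 0) → Tendsto t atTop (nhds 0) →
    Tendsto (fun n => ‖(t n)⁻¹ • (L (a + t n • u n) - L a) - D ulim‖) atTop (nhds 0)

/-- `f` is `μ`-strongly convex if `h ↦ f h - (μ/2)‖h‖²` is convex. -/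
def StronglyConvex {H : Type*} [NormedAddCommGroup H] [NormedSpace ℝ H]
    (μ : ℝ) (f : H → ℝ) : Prop :=
  ConvexOn ℝ Set.univ fun h => f h - μ / 2 * ‖h‖ ^ 2

lemma hadamard_fderiv {E B : Type*} [NormedAddCommGroup E] [NormedSpace ℝ E]
    [FiniteDimensional ℝ E]
    [NormedAddCommGroup B] [NormedSpace ℝ B] {L : E → B} {a : E} {D : E →L[ℝ] B}
    (h : HadamardDiffAt L a D) : HasFDerivAt L D a := by
  haveI : ProperSpace E := FiniteDimensional.proper ℝ E
  rw [hasFDerivAt_iff_isLittleO_nhds_zero, Asymptotics.isLittleO_iff]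
  by_contra hcon
  push Not at hcon
  obtain ⟨c, hc, hfr⟩ := hcon
  obtain ⟨x, hx0, hx⟩ := Filter.exists_seq_forall_of_frequently hfr
  have hxne : ∀ n, x n ≠ 0 := by
    intro n hn
    have := hx n
    simp [hn] at this
  have hnpos : ∀ n, 0 < ‖x n‖ := fun n => norm_pos_iff.2 (hxne n)
  have hmem : ∀ n, ‖x n‖⁻¹ • x n ∈ Metric.sphere (0 : E) 1 := by
    intro n
    simp [norm_smul, inv_mul_cancel₀ (hnpos n).ne']
  obtain ⟨u, -, φ, hφ, hlim⟩ := (isCompact_sphere (0 : E) 1).tendsto_subseq hmem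
  have ht : Tendsto (fun n => ‖x (φ n)‖) atTop (nhds 0) := by
    have := (hx0.comp hφ.tendsto_atTop).norm
    simpa using this
  have key := h _ u _ hlim (fun n => (hnpos (φ n)).ne') ht
  have hD : Tendsto (fun n => ‖D ((‖x (φ n)‖)⁻¹ • x (φ n)) - D u‖) atTop (nhds 0) := by
    rw [← tendsto_iff_norm_sub_tendsto_zero]
    exact (D.continuous.tendsto u).comp hlim
  have hsum := key.add hD
  rw [add_zero] at hsum
  have hlt := hsum.eventually (gt_mem_nhds hc)
  obtain ⟨n, hn⟩ := hlt.exists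
  have hp := hnpos (φ n)
  have h1 := hx (φ n)
  have e1 : ‖x (φ n)‖ • (((fun n => ‖x n‖⁻¹ • x n) ∘ φ) n) = x (φ n) := by
    simp [smul_smul, mul_inv_cancel₀ hp.ne']
  rw [e1] at hn
  have h2 : ‖‖x (φ n)‖⁻¹ • (L (a + x (φ n)) - L a - D (x (φ n)))‖ < c := by
    refine lt_of_le_of_lt ?_ hn
    have : ‖x (φ n)‖⁻¹ • (L (a + x (φ n)) - L a - D (x (φ n)))
        = (‖x (φ n)‖⁻¹ • (L (a + x (φ n)) - L a) - D u)
          - (D ((‖x (φ n)‖)⁻¹ • x (φ n)) - D u) := by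
      rw [map_smul, smul_sub]; abel
    rw [this]
    exact norm_sub_le _ _
  rw [norm_smul, norm_inv, norm_norm, inv_mul_lt_iff₀ hp] at h2
  linarith [mul_comm c ‖x (φ n)‖]

lemma hadamard_comp {E A B : Type*} [NormedAddCommGroup E] [NormedSpace ℝ E]
    [NormedAddCommGroup A] [NormedSpace ℝ A]
    [NormedAddCommGroup B] [NormedSpace ℝ B] {L : A → B} {a : A} {D : A →L[ℝ] B}
    (h : HadamardDiffAt L a D) (P : E →L[ℝ] A) :
    HadamardDiffAt (fun e => L (a + P e)) 0 (D.comp P) := by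
  intro u ul t hu ht0 ht
  have := h (fun n => P (u n)) (P ul) t ((P.continuous.tendsto ul).comp hu) ht0 ht
  simpa using this

lemma sc_lower {H : Type*} [NormedAddCommGroup H] [InnerProductSpace ℝ H] [CompleteSpace H]
    {f : H → ℝ} {μ : ℝ} (hf : StronglyConvex μ f) {x g : H} (hg : HasGradientAt f g x) (y : H) :
    f x + inner ℝ g (y - x) + μ / 2 * ‖y - x‖ ^ 2 ≤ f y := by
  have hl : HasDerivAt (fun s : ℝ => AffineMap.lineMap x y s) (y - x) (0 : ℝ) :=
    AffineMap.hasDerivAt_lineMap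
  have hk : ConvexOn ℝ Set.univ ((fun h => f h - μ / 2 * ‖h‖ ^ 2) ∘ (AffineMap.lineMap x y : ℝ →ᵃ[ℝ] H)) := by
    have := ConvexOn.comp_affineMap (AffineMap.lineMap x y : ℝ →ᵃ[ℝ] H) hf
    simpa using this
  have hd : HasDerivAt ((fun h => f h - μ / 2 * ‖h‖ ^ 2) ∘ (AffineMap.lineMap x y : ℝ →ᵃ[ℝ] H))
      (inner ℝ g (y - x) - μ / 2 * (2 * inner ℝ x (y - x))) 0 := by
    have h1 : HasDerivAt (fun s : ℝ => f (AffineMap.lineMap x y s)) (inner ℝ g (y - x)) 0 := by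
      have hg' : HasFDerivAt f (InnerProductSpace.toDual ℝ H g) (AffineMap.lineMap x y (0 : ℝ)) := by
        simpa using hg.hasFDerivAt
      have h0 := hg'.comp_hasDerivAt (0 : ℝ) hl
      rw [InnerProductSpace.toDual_apply_apply] at h0
      exact h0
    have h2 := (hl.norm_sq).const_mul (μ / 2)
    have h3 := h1.sub h2
    simp only [AffineMap.lineMap_apply_zero] at h3
    exact h3
  have := hk.le_slope_of_hasDerivAt (Set.mem_univ 0) (Set.mem_univ 1) one_pos hd
  simp [slope_def_field] at this
  have e : ‖y‖ ^ 2 = ‖x‖ ^ 2 + 2 * inner ℝ x (y - x) + ‖y - x‖ ^ 2 := by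
    have := norm_add_sq_real x (y - x)
    simpa using this
  rw [e] at this
  nlinarith

lemma sc_mono {H : Type*} [NormedAddCommGroup H] [InnerProductSpace ℝ H] [CompleteSpace H]
    {f : H → ℝ} {μ : ℝ} (hf : StronglyConvex μ f) {g : H → H} (hg : ∀ x, HasGradientAt f (g x) x)
    (x y : H) : μ * ‖y - x‖ ^ 2 ≤ inner ℝ (g y - g x) (y - x) := by
  have h1 := sc_lower hf (hg x) y
  have h2 := sc_lower hf (hg y) x
  have e : inner ℝ (g y) (x - y) = - inner ℝ (g y) (y - x) := by
    rw [← inner_neg_right, neg_sub]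
  rw [e, norm_sub_rev x y] at h2
  rw [inner_sub_left]
  linarith

lemma sc_mid {H : Type*} [NormedAddCommGroup H] [InnerProductSpace ℝ H]
    {f : H → ℝ} {μ : ℝ} (hf : StronglyConvex μ f) (x y : H) :
    f ((1/2 : ℝ) • x + (1/2 : ℝ) • y) + μ / 8 * ‖x - y‖ ^ 2 ≤ (f x + f y) / 2 := by
  have h := hf.2 (Set.mem_univ x) (Set.mem_univ y) (by norm_num : (0:ℝ) ≤ 1/2)
    (by norm_num : (0:ℝ) ≤ 1/2) (by norm_num)
  simp only [smul_eq_mul] at h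
  have e : ‖(1/2 : ℝ) • x + (1/2 : ℝ) • y‖ ^ 2 = (‖x + y‖ ^ 2) / 4 := by
    rw [← smul_add, norm_smul, mul_pow]; norm_num; ring
  have p := parallelogram_law_with_norm ℝ x y
  rw [e] at h
  have e2 : μ / 2 * (‖x + y‖ ^ 2 / 4) = μ / 2 * ((2 * (‖x‖ ^ 2 + ‖y‖ ^ 2) - ‖x - y‖ ^ 2) / 4) := by
    rw [← p]; ring
  rw [e2] at h
  nlinarith

lemma sc_exists {H : Type*} [NormedAddCommGroup H] [InnerProductSpace ℝ H] [CompleteSpace H]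
    {f : H → ℝ} {μ : ℝ} (hμ : 0 < μ) (hf : StronglyConvex μ f) {g : H → H}
    (hg : ∀ x, HasGradientAt f (g x) x) : ∃ x, ∀ y, f x ≤ f y := by
  have hbdd : BddBelow (Set.range f) := by
    refine ⟨f 0 - ‖g 0‖ ^ 2 / (2 * μ), ?_⟩
    rintro _ ⟨y, rfl⟩
    have h1 := sc_lower hf (hg 0) y
    simp only [sub_zero] at h1
    have h2 := neg_le_of_abs_le (abs_real_inner_le_norm (g 0) y)
    have h3 : ‖g 0‖ * ‖y‖ ≤ μ / 2 * ‖y‖ ^ 2 + ‖g 0‖ ^ 2 / (2 * μ) := by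
      have : μ / 2 * ‖y‖ ^ 2 + ‖g 0‖ ^ 2 / (2 * μ) - ‖g 0‖ * ‖y‖ = (μ * ‖y‖ - ‖g 0‖) ^ 2 / (2 * μ) := by
        field_simp; ring
      have : 0 ≤ (μ * ‖y‖ - ‖g 0‖) ^ 2 / (2 * μ) := by positivity
      linarith
    linarith
  set m := sInf (Set.range f) with hm
  have hmle : ∀ y, m ≤ f y := fun y => csInf_le hbdd ⟨y, rfl⟩
  have hex : ∀ n : ℕ, ∃ x, f x < m + 1 / ((n : ℝ) + 1) := by
    intro n
    obtain ⟨_, ⟨x, rfl⟩, hx⟩ := Real.lt_sInf_add_pos (Set.range_nonempty f)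
      (Nat.one_div_pos_of_nat (α := ℝ) (n := n))
    exact ⟨x, hx⟩
  choose x hx using hex
  have hfx : Tendsto (fun n => f (x n)) atTop (nhds m) := by
    refine tendsto_of_tendsto_of_tendsto_of_le_of_le tendsto_const_nhds ?_ (fun n => hmle _)
      (fun n => (hx n).le)
    simpa using (tendsto_one_div_add_atTop_nhds_zero_nat (𝕜 := ℝ)).const_add m
  have hc : CauchySeq x := by
    rw [Metric.cauchySeq_iff']
    intro ε hε
    have hδ : 0 < μ / 8 * ε ^ 2 := by positivity
    obtain ⟨N, hN⟩ := (hfx.eventually (gt_mem_nhds (lt_add_of_pos_right m hδ))).exists_forall_of_atTop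
    refine ⟨N, fun n hn => ?_⟩
    have h1 := hN n hn
    have h2 := hN N le_rfl
    have h3 := sc_mid hf (x n) (x N)
    have h4 := hmle ((1/2 : ℝ) • x n + (1/2 : ℝ) • x N)
    rw [dist_eq_norm]
    have h5 : μ / 8 * ‖x n - x N‖ ^ 2 < μ / 8 * ε ^ 2 := by linarith
    have h6 := lt_of_mul_lt_mul_left h5 (by positivity)
    exact lt_of_pow_lt_pow_left₀ 2 hε.le h6
  obtain ⟨a, ha⟩ := cauchySeq_tendsto_of_complete hc
  refine ⟨a, fun y => ?_⟩
  have hcont : Tendsto (fun n => f (x n)) atTop (nhds (f a)) :=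
    ((hg a).hasFDerivAt.continuousAt.tendsto).comp ha
  rw [tendsto_nhds_unique hcont hfx]
  exact hmle y

lemma hess_symm {H : Type*} [NormedAddCommGroup H] [InnerProductSpace ℝ H] [CompleteSpace H]
    {f : H → ℝ} {g : H → H} (hg : ∀ x, HasGradientAt f (g x) x) {x : H} {C : H →L[ℝ] H}
    (hC : HadamardDiffAt g x C) (v w : H) : inner ℝ (C v) w = inner ℝ (C w) v := by
  let P : ℝ × ℝ →L[ℝ] H := (ContinuousLinearMap.fst ℝ ℝ ℝ).smulRight v
    + (ContinuousLinearMap.snd ℝ ℝ ℝ).smulRight w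
  have h1 : HasFDerivAt (fun s => g (x + P s)) (C.comp P) 0 := hadamard_fderiv (hadamard_comp hC P)
  let T : H →L[ℝ] (ℝ × ℝ →L[ℝ] ℝ) :=
    ((ContinuousLinearMap.compL ℝ (ℝ × ℝ) H ℝ).flip P).comp (innerSL ℝ)
  have h2 : HasFDerivAt (fun s => T (g (x + P s))) (T.comp (C.comp P)) 0 :=
    T.hasFDerivAt.comp (0 : ℝ × ℝ) h1
  have h3 : ∀ s, HasFDerivAt (fun s => f (x + P s)) (T (g (x + P s))) s := by
    intro s
    have hp : HasFDerivAt (fun s => x + P s) P s := P.hasFDerivAt.const_add x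
    exact (hg (x + P s)).hasFDerivAt.comp s hp
  have := second_derivative_symmetric h3 h2 (1, 0) (0, 1)
  simpa [T, P] using this

/-- **Functional implicit differentiation.**  Under local strong convexity of the inner
objective in `h`, Fréchet differentiability in `h` (with gradient `gradIn`), and Hadamard
differentiability of the gradient map `(ω, h) ↦ ∂ₕ L_in (ω, h)` (with differential `DG`),
the minimizer `h*_ω` is uniquely defined, Fréchet differentiable in `ω`, and its derivative
(in adjoint form) satisfies `B_ω + ∂_ω h*_ω ∘ C_ω = 0`. -/
theorem stmt1 {d : ℕ} {H : Type*} [NormedAddCommGroup H] [InnerProductSpace ℝ H]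
    [CompleteSpace H] [TopologicalSpace.SeparableSpace H]
    (Lin : EuclideanSpace ℝ (Fin d) → H → ℝ)
    (gradIn : EuclideanSpace ℝ (Fin d) → H → H)
    -- local strong convexity in `h`
    (hsc : ∀ ω : EuclideanSpace ℝ (Fin d), ∃ μ > (0 : ℝ), ∃ ε > (0 : ℝ),
      ∀ ω', ‖ω' - ω‖ < ε → StronglyConvex μ (Lin ω'))
    -- Fréchet differentiability in `h` with gradient `gradIn ω h`
    (hgrad : ∀ ω h, HasGradientAt (Lin ω) (gradIn ω h) h)
    -- Hadamard differentiability of the gradient map on `Ω × H`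
    (DG : EuclideanSpace ℝ (Fin d) × H → (EuclideanSpace ℝ (Fin d) × H →L[ℝ] H))
    (hDG : ∀ p, HadamardDiffAt (fun q : EuclideanSpace ℝ (Fin d) × H => gradIn q.1 q.2) p (DG p)) :
    ∃ hstar : EuclideanSpace ℝ (Fin d) → H,
      -- existence of a minimizer
      (∀ ω h, Lin ω (hstar ω) ≤ Lin ω h) ∧
      -- uniqueness of the minimizer
      (∀ ω h, (∀ h', Lin ω h ≤ Lin ω h') → h = hstar ω) ∧
      -- Fréchet differentiability of `ω ↦ h*_ω` and the implicit equation
      -- `B_ω + ∂_ω h*_ω ∘ C_ω = 0` (in adjoint form `H → ℝ^d`)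
      ∀ ω, ∃ J : EuclideanSpace ℝ (Fin d) →L[ℝ] H,
        HasFDerivAt hstar J ω ∧
        ContinuousLinearMap.adjoint
            ((DG (ω, hstar ω)).comp (ContinuousLinearMap.inl ℝ (EuclideanSpace ℝ (Fin d)) H))
          + (ContinuousLinearMap.adjoint J).comp
              ((DG (ω, hstar ω)).comp (ContinuousLinearMap.inr ℝ (EuclideanSpace ℝ (Fin d)) H))
          = 0 := by
  choose hstar hmin using fun ω => (by
    obtain ⟨μ, hμ, ε, hε, h⟩ := hsc ω
    exact sc_exists hμ (h ω (by simpa using hε)) (hgrad ω) : ∃ x, ∀ y, Lin ω x ≤ Lin ω y)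
  have hzero : ∀ ω h, (∀ h', Lin ω h ≤ Lin ω h') → gradIn ω h = 0 := by
    intro ω h hh
    have h1 : IsLocalMin (Lin ω) h := Filter.Eventually.of_forall hh
    have := h1.hasFDerivAt_eq_zero (hgrad ω h).hasFDerivAt
    simpa using this
  refine ⟨hstar, hmin, ?_, ?_⟩
  · intro ω h hh
    obtain ⟨μ, hμ, ε, hε, hs⟩ := hsc ω
    have h1 := sc_mono (hs ω (by simpa using hε)) (hgrad ω) (hstar ω) h
    rw [hzero ω h hh, hzero ω _ (hmin ω)] at h1
    simp only [sub_self, inner_zero_left] at h1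
    have h2 : ‖h - hstar ω‖ ^ 2 ≤ 0 := by
      by_contra hcon
      push Not at hcon
      have := mul_pos hμ hcon
      linarith
    have h3 : ‖h - hstar ω‖ = 0 := by
      have := le_antisymm h2 (sq_nonneg _)
      simpa using this
    exact sub_eq_zero.1 (norm_eq_zero.1 h3)
  · intro ω
    obtain ⟨μ, hμ, ε, hε, hs⟩ := hsc ω
    set D := DG (ω, hstar ω) with hDdef
    have hD := hDG (ω, hstar ω)
    rw [← hDdef] at hD
    set B := D.comp (ContinuousLinearMap.inl ℝ (EuclideanSpace ℝ (Fin d)) H) with hB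
    set C := D.comp (ContinuousLinearMap.inr ℝ (EuclideanSpace ℝ (Fin d)) H) with hCdef
    have hDBC : ∀ u v, D (u, v) = B u + C v := by
      intro u v
      simp [hB, hCdef, ← map_add]
    have hC : HadamardDiffAt (gradIn ω) (hstar ω) C := by
      intro u ul t hu ht0 ht
      have := hD (fun n => (0, u n)) (0, ul) t (tendsto_const_nhds.prodMk_nhds hu) ht0 ht
      simpa [hCdef] using this
    have hsymm := hess_symm (hgrad ω) hC
    have hcoer : ∀ v, μ * ‖v‖ * ‖v‖ ≤ inner ℝ (C v) v := by
      intro v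
      have ht : Tendsto (fun n : ℕ => 1 / ((n : ℝ) + 1)) atTop (nhds 0) :=
        tendsto_one_div_add_atTop_nhds_zero_nat
      have htp : ∀ n : ℕ, 0 < 1 / ((n : ℝ) + 1) := fun n => Nat.one_div_pos_of_nat
      have h1 := hC (fun _ => v) v _ tendsto_const_nhds (fun n => (htp n).ne') ht
      rw [← tendsto_iff_norm_sub_tendsto_zero] at h1
      have h2 := h1.inner (𝕜 := ℝ) (tendsto_const_nhds (x := v))
      refine ge_of_tendsto' h2 (fun n => ?_)
      have h3 := sc_mono (hs ω (by simpa using hε)) (hgrad ω) (hstar ω)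
        (hstar ω + (1 / ((n : ℝ) + 1)) • v)
      have hp := htp n
      generalize 1 / ((n : ℝ) + 1) = s at *
      rw [add_sub_cancel_left, inner_smul_right, norm_smul, Real.norm_of_nonneg hp.le] at h3
      rw [inner_smul_left]
      simp only [map_inv₀, conj_trivial]
      rw [le_inv_mul_iff₀ hp]
      have h4 : s * (s * (μ * ‖v‖ * ‖v‖)) ≤ s * inner ℝ (gradIn ω (hstar ω + s • v) - gradIn ω (hstar ω)) v := by
        calc _ = μ * (s * ‖v‖) ^ 2 := by ring
          _ ≤ _ := h3
      exact le_of_mul_le_mul_left h4 hp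
    let Bil : H →L[ℝ] H →L[ℝ] ℝ := (innerSL ℝ).comp C
    have hBil : IsCoercive Bil := ⟨μ, hμ, fun v => by simpa [Bil] using hcoer v⟩
    let e := hBil.continuousLinearEquivOfBilin
    have he : ∀ v, e v = C v := by
      intro v
      refine ext_inner_right ℝ fun w => ?_
      rw [IsCoercive.continuousLinearEquivOfBilin_apply]
      simp [Bil]
    let J : EuclideanSpace ℝ (Fin d) →L[ℝ] H := -((e.symm : H →L[ℝ] H).comp B)
    have hJ : ∀ u, B u + C (J u) = 0 := by
      intro u
      rw [← he]
      simp [J]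
    refine ⟨J, hadamard_fderiv ?_, ?_⟩
    · intro u ul t hu ht0 ht
      have h1 := hD (fun n => (u n, J ul)) (ul, J ul) t (hu.prodMk_nhds tendsto_const_nhds) ht0 ht
      rw [hDBC, hJ] at h1
      simp only [Prod.smul_mk, Prod.mk_add_mk, hzero ω _ (hmin ω), sub_zero] at h1
      have h2 := h1.const_mul μ⁻¹
      rw [mul_zero] at h2
      refine squeeze_zero' (Filter.Eventually.of_forall fun n => norm_nonneg _) ?_ h2
      have h3 : Tendsto (fun n => ‖t n • u n‖) atTop (nhds 0) := by
        have := (ht.smul hu).norm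
        simpa using this
      filter_upwards [h3.eventually (gt_mem_nhds hε)] with n hn
      have h4 := sc_mono (hs (ω + t n • u n) (by simpa using hn)) (hgrad (ω + t n • u n))
        (hstar (ω + t n • u n)) (hstar ω + t n • J ul)
      rw [hzero _ _ (hmin (ω + t n • u n)), sub_zero] at h4
      have h5 := h4.trans (real_inner_le_norm _ _)
      have h6 : μ * ‖hstar ω + t n • J ul - hstar (ω + t n • u n)‖
          ≤ ‖gradIn (ω + t n • u n) (hstar ω + t n • J ul)‖ := by
        rcases (norm_nonneg (hstar ω + t n • J ul - hstar (ω + t n • u n))).eq_or_lt with h | h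
        · rw [← h]; simp
        · refine le_of_mul_le_mul_right ?_ h
          calc _ = _ := by ring
            _ ≤ _ := h5
      have h7 : (t n)⁻¹ • (hstar (ω + t n • u n) - hstar ω) - J ul
          = -((t n)⁻¹ • (hstar ω + t n • J ul - hstar (ω + t n • u n))) := by
        have : (t n)⁻¹ • (t n • J ul) = J ul := inv_smul_smul₀ (ht0 n) _
        simp only [smul_sub, smul_add, this]
        abel
      rw [h7, norm_neg, norm_smul, norm_smul, le_inv_mul_iff₀ hμ]
      calc _ = ‖(t n)⁻¹‖ * (μ * ‖hstar ω + t n • J ul - hstar (ω + t n • u n)‖) := by ring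
        _ ≤ _ := by gcongr
    · ext1 v
      refine ext_inner_right ℝ fun w => ?_
      simp only [ContinuousLinearMap.add_apply, ContinuousLinearMap.comp_apply, inner_add_left,
        ContinuousLinearMap.adjoint_inner_left, ContinuousLinearMap.zero_apply, inner_zero_left]
      change inner ℝ v (B w) + inner ℝ (C v) (J w) = 0
      rw [hsymm, real_inner_comm, ← inner_add_left, hJ, inner_zero_left]
end

section
/- (Functional adjoint sensitivity.) Assume: (i) for every ω ∈ Ω there exist μ > 0 and a neighborhood of ω on which h ↦ L_in(ω',h) is μ-strongly convex for every ω' in that neighborhood; (ii) h ↦ L_in(ω,h) is finite-valued and Fréchet differentiable on H for every ω; (iii) (ω,h) ↦ ∂_h L_in(ω,h) is Hadamard differentiable on Ω × H; (iv) L_out : Ω × H → ℝ is jointly Fréchet differentiable. Then the total objective F(ω) := L_out(ω, h*_ω) is differentiable with gradient ∇F(ω) = g_ω + B_ω a*_ω, where g_ω := ∂_ω L_out(ω,h*_ω), d_ω := ∂_h L_out(ω,h*_ω), B_ω := ∂_{ω,h}L_in(ω,h*_ω), C_ω := ∂²_h L_in(ω,h*_ω), and the adjoint function a*_ω := −C_ω^{-1}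 d_ω ∈ H is the unique minimizer over a ∈ H of the strongly convex quadratic L_adj(ω,a) := (1/2)⟨a, C_ω a⟩_H + ⟨a, d_ω⟩_H. -/
open Filter Topology RealInnerProductSpace

theorem aux_hadamard_fderiv {E B : Type*} [NormedAddCommGroup E] [NormedSpace ℝ E]
    [FiniteDimensional ℝ E] [NormedAddCommGroup B] [NormedSpace ℝ B] {L : E → B} {a : E}
    {D : E →L[ℝ] B} (hL : HadamardDiffAt L a D) : HasFDerivAt L D a := by
  rw [hasFDerivAt_iff_isLittleO_nhds_zero, Asymptotics.isLittleO_iff]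
  by_contra hcon
  push Not at hcon
  obtain ⟨c, hc, hfreq⟩ := hcon
  obtain ⟨x, hx, hxp⟩ := exists_seq_forall_of_frequently hfreq
  have hne : ∀ n, x n ≠ 0 := by
    intro n h0
    have := hxp n
    simp [h0] at this
  have hpos : ∀ n, 0 < ‖x n‖ := fun n => norm_pos_iff.2 (hne n)
  have hmem : ∀ n, (‖x n‖⁻¹ • x n) ∈ Metric.sphere (0 : E) 1 := by
    intro n
    simp [norm_smul, (hpos n).ne']
  have : ProperSpace E := FiniteDimensional.proper ℝ E
  obtain ⟨u, -, φ, hφ, hu⟩ := (isCompact_sphere (0 : E) 1).tendsto_subseq hmem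
  have ht : Tendsto (fun n => ‖x (φ n)‖) atTop (𝓝 0) := by
    have := (hx.comp hφ.tendsto_atTop).norm
    simpa using this
  have h1 := hL _ u _ hu (fun n => (hpos (φ n)).ne') ht
  have h2 : Tendsto (fun n => ‖D ((fun n => ‖x n‖⁻¹ • x n) (φ n)) - D u‖) atTop (𝓝 0) := by
    have := ((D.continuous.tendsto u).comp hu).sub_const (D u)
    simpa using this.norm
  have h3 := h1.add h2
  rw [add_zero] at h3
  have h4 : ∀ n, c ≤ ‖(‖x (φ n)‖)⁻¹ • (L (a + ‖x (φ n)‖ • ((fun n => ‖x n‖⁻¹ • x n) ∘ φ) n) - L a)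
      - D u‖ + ‖D ((fun n => ‖x n‖⁻¹ • x n) (φ n)) - D u‖ := by
    intro n
    have hp := hpos (φ n)
    have e : ‖x (φ n)‖ • ((fun n => ‖x n‖⁻¹ • x n) ∘ φ) n = x (φ n) := by
      simp [smul_smul, hp.ne']
    rw [e]
    refine le_trans ?_ (norm_sub_le _ _)
    rw [sub_sub_sub_cancel_right]
    simp only [map_smul]
    rw [← smul_sub, norm_smul, norm_inv, norm_norm, inv_mul_eq_div, le_div_iff₀ hp]
    exact (hxp (φ n)).le
  exact absurd (ge_of_tendsto' h3 h4) (not_le.2 hc)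

theorem aux_symm {H : Type*} [NormedAddCommGroup H] [InnerProductSpace ℝ H] [CompleteSpace H]
    {f : H → ℝ} {G : H → H} (hG : ∀ h, HasGradientAt f (G h) h) {h : H} {C : H →L[ℝ] H}
    (hC : HadamardDiffAt G h C) (u v : H) : ⟪C u, v⟫ = ⟪C v, u⟫ := by
  let T : ℝ × ℝ →L[ℝ] H :=
    (ContinuousLinearMap.fst ℝ ℝ ℝ).smulRight u + (ContinuousLinearMap.snd ℝ ℝ ℝ).smulRight v
  let Ψ : H →L[ℝ] (ℝ × ℝ →L[ℝ] ℝ) :=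
    ((ContinuousLinearMap.compL ℝ (ℝ × ℝ) H ℝ).flip T).comp (innerSL ℝ)
  have hΨ : ∀ w p, Ψ w p = ⟪w, T p⟫ := fun w p => rfl
  have haff : ∀ p, HasFDerivAt (fun p => h + T p) T p := fun p => T.hasFDerivAt.const_add h
  have h1 : ∀ p, HasFDerivAt (fun p => f (h + T p)) (Ψ (G (h + T p))) p := by
    intro p
    exact ((hG (h + T p)).hasFDerivAt.comp p (haff p))
  have h2 : HadamardDiffAt (fun p => G (h + T p)) 0 (C.comp T) := by
    intro w wl t hw ht0 ht
    have := hC (fun n => T (w n)) (T wl) t ((T.continuous.tendsto wl).comp hw) ht0 ht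
    simpa using this
  have h3 : HasFDerivAt (fun p => Ψ (G (h + T p))) (Ψ.comp (C.comp T)) 0 :=
    Ψ.hasFDerivAt.comp (0 : ℝ × ℝ) (aux_hadamard_fderiv h2)
  have h4 := second_derivative_symmetric h1 h3 (1, 0) (0, 1)
  simpa [hΨ, T] using h4

theorem aux_first {H : Type*} [NormedAddCommGroup H] [InnerProductSpace ℝ H] [CompleteSpace H]
    {f : H → ℝ} {G : H → H} (hG : ∀ h, HasGradientAt f (G h) h) {μ : ℝ}
    (hf : StronglyConvex μ f) (x y : H) :
    f x + ⟪G x, y - x⟫ + μ / 2 * ‖y - x‖ ^ 2 ≤ f y := by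
  have hconv : ConvexOn ℝ Set.univ
      (fun t : ℝ => f (x + t • (y - x)) - μ / 2 * ‖x + t • (y - x)‖ ^ 2) := by
    have := ConvexOn.comp_affineMap (AffineMap.lineMap x y : ℝ →ᵃ[ℝ] H) hf
    rw [Set.preimage_univ] at this
    have e : (fun t : ℝ => f (x + t • (y - x)) - μ / 2 * ‖x + t • (y - x)‖ ^ 2) =
        (fun h => f h - μ / 2 * ‖h‖ ^ 2) ∘ (AffineMap.lineMap x y : ℝ →ᵃ[ℝ] H) := by
      funext t
      simp [AffineMap.lineMap_apply, add_comm]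
    rw [e]
    exact this
  have hl : HasDerivAt (fun t : ℝ => x + t • (y - x)) (y - x) 0 := by
    simpa using ((hasDerivAt_id (0 : ℝ)).smul_const (y - x)).const_add x
  have h1 : HasDerivAt (fun t : ℝ => f (x + t • (y - x))) ⟪G x, y - x⟫ 0 := by
    have h0 : HasFDerivAt f (InnerProductSpace.toDual ℝ H (G x)) (x + (0 : ℝ) • (y - x)) := by
      simpa using (hG x).hasFDerivAt
    have := h0.comp_hasDerivAt (0 : ℝ) hl
    rw [InnerProductSpace.toDual_apply_apply] at this
    exact this
  have h2 := hl.norm_sq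
  have h3 := h1.sub (h2.const_mul (μ / 2))
  have h4 := hconv.le_slope_of_hasDerivAt (Set.mem_univ 0) (Set.mem_univ 1) one_pos h3
  simp [slope_def_field] at h4
  have h5 : ‖y‖ ^ 2 = ‖x‖ ^ 2 + 2 * ⟪x, y - x⟫ + ‖y - x‖ ^ 2 := by
    rw [← norm_add_sq_real]; simp
  rw [h5] at h4
  linarith

theorem aux_exists_min {H : Type*} [NormedAddCommGroup H] [InnerProductSpace ℝ H] [CompleteSpace H]
    {f : H → ℝ} {G : H → H} (hG : ∀ h, HasGradientAt f (G h) h) {μ : ℝ} (hμ : 0 < μ)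
    (hf : StronglyConvex μ f) : ∃ x, ∀ y, f x ≤ f y := by
  have hbdd : BddBelow (Set.range f) := by
    refine ⟨f 0 - ‖G 0‖ ^ 2 / (2 * μ), ?_⟩
    rintro _ ⟨y, rfl⟩
    have h1 := aux_first hG hf 0 y
    have h2 := neg_le_of_abs_le (abs_real_inner_le_norm (G 0) y)
    simp only [sub_zero] at h1
    have h3 : 0 ≤ ‖G 0‖ ^ 2 / (2 * μ) - ‖G 0‖ * ‖y‖ + μ / 2 * ‖y‖ ^ 2 := by
      have : ‖G 0‖ ^ 2 / (2 * μ) - ‖G 0‖ * ‖y‖ + μ / 2 * ‖y‖ ^ 2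
        = (‖G 0‖ - μ * ‖y‖) ^ 2 / (2 * μ) := by field_simp; ring
      rw [this]; positivity
    linarith
  set m := sInf (Set.range f) with hm
  have hmle : ∀ y, m ≤ f y := fun y => csInf_le hbdd ⟨y, rfl⟩
  obtain ⟨s, -, hs, hsr⟩ := exists_seq_tendsto_sInf (Set.range_nonempty f) hbdd
  choose x hx using hsr
  have hfx : Tendsto (fun n => f (x n)) atTop (𝓝 m) := by simpa [hx] using hs
  have hmid : ∀ a b, μ / 4 * ‖a - b‖ ^ 2 ≤ (f a - m) + (f b - m) := by
    intro a b
    have h1 := aux_first hG hf ((1/2 : ℝ) • (a + b)) a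
    have h2 := aux_first hG hf ((1/2 : ℝ) • (a + b)) b
    have ea : a - (1/2 : ℝ) • (a + b) = (1/2 : ℝ) • (a - b) := by module
    have eb : b - (1/2 : ℝ) • (a + b) = -((1/2 : ℝ) • (a - b)) := by module
    rw [ea] at h1
    rw [eb, inner_neg_right, norm_neg] at h2
    have h3 := hmle ((1/2 : ℝ) • (a + b))
    have h4 : ‖(1/2 : ℝ) • (a - b)‖ ^ 2 = 1/4 * ‖a - b‖ ^ 2 := by
      rw [norm_smul, mul_pow]; norm_num
    rw [h4] at h1 h2
    linarith
  have hcau : CauchySeq x := by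
    rw [Metric.cauchySeq_iff]
    intro ε hε
    have : ∀ᶠ n in atTop, f (x n) < m + μ / 8 * ε ^ 2 :=
      hfx.eventually_lt_const (by have : 0 < μ / 8 * ε ^ 2 := by positivity
                                  linarith)
    obtain ⟨N, hN⟩ := eventually_atTop.1 this
    refine ⟨N, fun a ha b hb => ?_⟩
    have h1 := hmid (x a) (x b)
    have h2 := hN a ha
    have h3 := hN b hb
    rw [dist_eq_norm]
    have h4 : ‖x a - x b‖ ^ 2 < ε ^ 2 := by
      by_contra h
      push Not at h
      nlinarith
    exact lt_of_pow_lt_pow_left₀ 2 hε.le h4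
  obtain ⟨z, hz⟩ := cauchySeq_tendsto_of_complete hcau
  have hcont : Tendsto (fun n => f (x n)) atTop (𝓝 (f z)) :=
    ((hG z).hasFDerivAt.continuousAt.tendsto).comp hz
  refine ⟨z, fun y => ?_⟩
  rw [tendsto_nhds_unique hcont hfx]
  exact hmle y

theorem aux_mono {H : Type*} [NormedAddCommGroup H] [InnerProductSpace ℝ H] [CompleteSpace H]
    {f : H → ℝ} {G : H → H} (hG : ∀ h, HasGradientAt f (G h) h) {μ : ℝ}
    (hf : StronglyConvex μ f) (x y : H) :
    μ * ‖y - x‖ ^ 2 ≤ ⟪G y - G x, y - x⟫ := by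
  have h1 := aux_first hG hf x y
  have h2 := aux_first hG hf y x
  rw [← neg_sub y x, inner_neg_right, norm_neg] at h2
  rw [inner_sub_left]
  linarith

theorem aux_mono_norm {H : Type*} [NormedAddCommGroup H] [InnerProductSpace ℝ H] [CompleteSpace H]
    {f : H → ℝ} {G : H → H} (hG : ∀ h, HasGradientAt f (G h) h) {μ : ℝ}
    (hf : StronglyConvex μ f) (x y : H) :
    μ * ‖y - x‖ ≤ ‖G y - G x‖ := by
  have h1 := (aux_mono hG hf x y).trans (real_inner_le_norm _ _)
  rcases (norm_nonneg (y - x)).eq_or_lt with h | h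
  · rw [← h]; simp
  · rw [pow_two, ← mul_assoc] at h1
    exact le_of_mul_le_mul_right h1 h

theorem aux_coercive {H : Type*} [NormedAddCommGroup H] [InnerProductSpace ℝ H] [CompleteSpace H]
    {f : H → ℝ} {G : H → H} (hG : ∀ h, HasGradientAt f (G h) h) {μ : ℝ}
    (hf : StronglyConvex μ f) {h : H} {C : H →L[ℝ] H} (hC : HadamardDiffAt G h C) (v : H) :
    μ * ‖v‖ ^ 2 ≤ ⟪C v, v⟫ := by
  have ht : ∀ n : ℕ, (0 : ℝ) < 1 / ((n : ℝ) + 1) := fun n => by positivity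
  have h1 := hC (fun _ => v) v (fun n : ℕ => 1 / ((n : ℝ) + 1)) tendsto_const_nhds
    (fun n => (ht n).ne') tendsto_one_div_add_atTop_nhds_zero_nat
  have h2 := tendsto_iff_norm_sub_tendsto_zero.2 h1
  have h3 := h2.inner (tendsto_const_nhds (x := v) (f := atTop) (α := ℕ)) (𝕜 := ℝ)
  refine ge_of_tendsto' h3 fun n => ?_
  have hp := ht n
  set t := 1 / ((n : ℝ) + 1) with htdef
  have h4 := aux_mono hG hf h (h + t • v)
  rw [add_sub_cancel_left, inner_smul_right, norm_smul, mul_pow, Real.norm_eq_abs, sq_abs] at h4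
  rw [real_inner_smul_left, inv_mul_eq_div, le_div_iff₀ hp]
  have h5 : t * (μ * ‖v‖ ^ 2 * t) ≤ t * ⟪G (h + t • v) - G h, v⟫ := by linarith
  exact le_of_mul_le_mul_left h5 hp

theorem aux_surj {H : Type*} [NormedAddCommGroup H] [InnerProductSpace ℝ H] [CompleteSpace H]
    {μ : ℝ} (hμ : 0 < μ) (C : H →L[ℝ] H) (hC : ∀ v, μ * ‖v‖ ^ 2 ≤ ⟪C v, v⟫) :
    ∃ E : H ≃L[ℝ] H, ∀ v, E v = C v := by
  let B : H →L[ℝ] H →L[ℝ] ℝ := (innerSL ℝ).comp C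
  have hB : IsCoercive B := ⟨μ, hμ, fun v => by
    have := hC v
    simpa [B, pow_two, mul_assoc] using this⟩
  refine ⟨hB.continuousLinearEquivOfBilin, fun v => ?_⟩
  refine ext_inner_right ℝ fun w => ?_
  rw [hB.continuousLinearEquivOfBilin_apply]
  rfl

/-- **Functional adjoint sensitivity.**  Under the assumptions of the functional implicit
differentiation theorem on `L_in`, and joint Fréchet differentiability of `L_out`
(with partial gradients `gOut ∈ ℝ^d` and `dOut ∈ H`), the total objective
`F (ω) = L_out (ω, h*_ω)` is differentiable with `∇F(ω) = g_ω + B_ω a*_ω`, where the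
adjoint function `a*_ω = -C_ω⁻¹ d_ω` is the unique minimizer over `H` of the strongly
convex quadratic `a ↦ (1/2)⟪a, C_ω a⟫ + ⟪a, d_ω⟫`. -/
theorem stmt3 {d : ℕ} {H : Type*} [NormedAddCommGroup H] [InnerProductSpace ℝ H]
    [CompleteSpace H] [TopologicalSpace.SeparableSpace H]
    (Lin : EuclideanSpace ℝ (Fin d) → H → ℝ)
    (gradIn : EuclideanSpace ℝ (Fin d) → H → H)
    (hsc : ∀ ω : EuclideanSpace ℝ (Fin d), ∃ μ > (0 : ℝ), ∃ ε > (0 : ℝ),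
      ∀ ω', ‖ω' - ω‖ < ε → StronglyConvex μ (Lin ω'))
    (hgrad : ∀ ω h, HasGradientAt (Lin ω) (gradIn ω h) h)
    (DG : EuclideanSpace ℝ (Fin d) × H → (EuclideanSpace ℝ (Fin d) × H →L[ℝ] H))
    (hDG : ∀ p, HadamardDiffAt (fun q : EuclideanSpace ℝ (Fin d) × H => gradIn q.1 q.2) p (DG p))
    -- `L_out` is jointly Fréchet differentiable with partial gradients `gOut` and `dOut`
    (Lout : EuclideanSpace ℝ (Fin d) → H → ℝ)
    (gOut : EuclideanSpace ℝ (Fin d) × H → EuclideanSpace ℝ (Fin d))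
    (dOut : EuclideanSpace ℝ (Fin d) × H → H)
    (hLout : ∀ p : EuclideanSpace ℝ (Fin d) × H,
      HasFDerivAt (fun q : EuclideanSpace ℝ (Fin d) × H => Lout q.1 q.2)
        ((innerSL ℝ (gOut p)).comp (ContinuousLinearMap.fst ℝ (EuclideanSpace ℝ (Fin d)) H)
          + (innerSL ℝ (dOut p)).comp (ContinuousLinearMap.snd ℝ (EuclideanSpace ℝ (Fin d)) H))
        p) :
    ∃ hstar : EuclideanSpace ℝ (Fin d) → H,
      (∀ ω h, Lin ω (hstar ω) ≤ Lin ω h) ∧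
      (∀ ω h, (∀ h', Lin ω h ≤ Lin ω h') → h = hstar ω) ∧
      ∀ ω, ∃ astar : H,
        -- `a*_ω = -C_ω⁻¹ d_ω`, i.e. `C_ω a*_ω + d_ω = 0`
        ((DG (ω, hstar ω)).comp (ContinuousLinearMap.inr ℝ (EuclideanSpace ℝ (Fin d)) H)) astar
            + dOut (ω, hstar ω) = 0 ∧
        -- `a*_ω` minimizes the quadratic adjoint objective
        (∀ a : H,
          (1/2) * ⟪astar, ((DG (ω, hstar ω)).comp
              (ContinuousLinearMap.inr ℝ (EuclideanSpace ℝ (Fin d)) H)) astar⟫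
            + ⟪astar, dOut (ω, hstar ω)⟫ ≤
          (1/2) * ⟪a, ((DG (ω, hstar ω)).comp
              (ContinuousLinearMap.inr ℝ (EuclideanSpace ℝ (Fin d)) H)) a⟫
            + ⟪a, dOut (ω, hstar ω)⟫) ∧
        -- and it is the unique such minimizer
        (∀ a : H,
          (∀ a' : H,
            (1/2) * ⟪a, ((DG (ω, hstar ω)).comp
                (ContinuousLinearMap.inr ℝ (EuclideanSpace ℝ (Fin d)) H)) a⟫
              + ⟪a, dOut (ω, hstar ω)⟫ ≤
            (1/2) * ⟪a', ((DG (ω, hstar ω)).comp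
                (ContinuousLinearMap.inr ℝ (EuclideanSpace ℝ (Fin d)) H)) a'⟫
              + ⟪a', dOut (ω, hstar ω)⟫) → a = astar) ∧
        -- `∇F(ω) = g_ω + B_ω a*_ω`
        HasGradientAt (fun ω' => Lout ω' (hstar ω'))
          (gOut (ω, hstar ω) +
            (ContinuousLinearMap.adjoint
              ((DG (ω, hstar ω)).comp
                (ContinuousLinearMap.inl ℝ (EuclideanSpace ℝ (Fin d)) H))) astar) ω := by
  have hex : ∀ ω, ∃ x, ∀ y, Lin ω x ≤ Lin ω y := by
    intro ω
    obtain ⟨μ, hμ, ε, hε, hs⟩ := hsc ω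
    exact aux_exists_min (hgrad ω) hμ (hs ω (by simpa using hε))
  choose hstar hmin using hex
  have hzero : ∀ ω h, (∀ y, Lin ω h ≤ Lin ω y) → gradIn ω h = 0 := by
    intro ω h hh
    have h1 : IsLocalMin (Lin ω) h := Filter.Eventually.of_forall hh
    have h2 := h1.hasFDerivAt_eq_zero (hgrad ω h).hasFDerivAt
    simpa using h2
  refine ⟨hstar, hmin, ?_, ?_⟩
  · intro ω h hh
    obtain ⟨μ, hμ, ε, hε, hs⟩ := hsc ω
    have h1 := aux_mono_norm (hgrad ω) (hs ω (by simpa using hε)) (hstar ω) h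
    rw [hzero ω h hh, hzero ω _ (hmin ω), sub_zero, norm_zero] at h1
    have h2 : ‖h - hstar ω‖ ≤ 0 := by
      by_contra h3
      push Not at h3
      nlinarith [mul_pos hμ h3]
    exact sub_eq_zero.1 (norm_le_zero_iff.1 h2)
  intro ω
  obtain ⟨μ, hμ, ε, hε, hs⟩ := hsc ω
  have hsω := hs ω (by simpa using hε)
  set D := DG (ω, hstar ω) with hD
  set dd := dOut (ω, hstar ω) with hdd
  set C := D.comp (ContinuousLinearMap.inr ℝ (EuclideanSpace ℝ (Fin d)) H) with hCdef
  set B := D.comp (ContinuousLinearMap.inl ℝ (EuclideanSpace ℝ (Fin d)) H) with hBdef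
  have hDs : ∀ u v, D (u, v) = B u + C v := by
    intro u v
    simp [hBdef, hCdef, ← map_add]
  have hCH : HadamardDiffAt (gradIn ω) (hstar ω) C := by
    intro u ul t hu ht0 ht
    have := hDG (ω, hstar ω) (fun n => (0, u n)) (0, ul) t
      (tendsto_const_nhds.prodMk_nhds hu) ht0 ht
    simpa [hCdef] using this
  have hsym := aux_symm (hgrad ω) hCH
  have hco := aux_coercive (hgrad ω) hsω hCH
  obtain ⟨E, hE⟩ := aux_surj hμ C hco
  have hEs : ∀ x, C (E.symm x) = x := fun x => by rw [← hE]; simp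
  refine ⟨-E.symm dd, ?_⟩
  set a := -E.symm dd with ha
  have hCa : C a = -dd := by rw [ha, map_neg, hEs]
  have hquad : ∀ b : H, (1/2) * ⟪b, C b⟫ + ⟪b, dd⟫ =
      (1/2) * ⟪a, C a⟫ + ⟪a, dd⟫ + (1/2) * ⟪C (b - a), b - a⟫ := by
    intro b
    have hd : dd = - C a := by rw [hCa, neg_neg]
    have h1 := hsym a b
    rw [hd]
    simp only [map_sub, inner_sub_left, inner_sub_right, inner_neg_right]
    rw [real_inner_comm (C b) b, real_inner_comm (C a) a, real_inner_comm (C a) b]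
    linarith
  refine ⟨by rw [hCa]; simp, ?_, ?_, ?_⟩
  · intro b
    rw [hquad b]
    have := hco (b - a)
    have : 0 ≤ μ * ‖b - a‖ ^ 2 := by positivity
    linarith
  · intro b hb
    have h1 := hb a
    rw [hquad b] at h1
    have h2 := hco (b - a)
    have h3 : ‖b - a‖ ^ 2 ≤ 0 := by
      by_contra h3
      push Not at h3
      nlinarith [mul_pos hμ h3]
    have h4 : ‖b - a‖ = 0 := by nlinarith [sq_nonneg ‖b - a‖, pow_eq_zero_iff (two_ne_zero) (a := ‖b - a‖)]
    exact sub_eq_zero.1 (norm_eq_zero.1 h4)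
  · let S : EuclideanSpace ℝ (Fin d) →L[ℝ] H := -((E.symm : H →L[ℝ] H).comp B)
    have hS : ∀ u, S u = -E.symm (B u) := fun u => rfl
    have hHad : HadamardDiffAt hstar ω S := by
      intro u ul t hu ht0 ht
      have h1 := hDG (ω, hstar ω) (fun n => (u n, S ul)) (ul, S ul) t
        (hu.prodMk_nhds tendsto_const_nhds) ht0 ht
      rw [← hD, hDs, hS, map_neg, hEs, add_neg_cancel] at h1
      have h2 := h1.const_mul μ⁻¹
      rw [mul_zero] at h2
      refine squeeze_zero' (Eventually.of_forall fun n => norm_nonneg _) ?_ h2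
      have h3 : Tendsto (fun n => ‖(ω + t n • u n) - ω‖) atTop (𝓝 0) := by
        have := (ht.smul hu).norm
        simpa using this
      filter_upwards [h3.eventually_lt_const hε] with n hn
      have h4 := aux_mono_norm (hgrad _) (hs _ hn) (hstar ω + t n • S ul) (hstar (ω + t n • u n))
      rw [hzero _ _ (hmin _), zero_sub, norm_neg] at h4
      have h5 : (t n)⁻¹ • (hstar (ω + t n • u n) - hstar ω) - S ul =
          (t n)⁻¹ • (hstar (ω + t n • u n) - (hstar ω + t n • S ul)) := by
        rw [← sub_sub, smul_sub (t n)⁻¹ (_ - _), smul_smul, inv_mul_cancel₀ (ht0 n), one_smul]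
      rw [h5, ← hS]
      simp only [Prod.smul_mk, Prod.mk_add_mk, hzero ω _ (hmin ω), sub_zero]
      rw [norm_smul, norm_smul, le_inv_mul_iff₀ hμ, mul_left_comm]
      exact mul_le_mul_of_nonneg_left h4 (norm_nonneg _)
    have hF := aux_hadamard_fderiv hHad
    have h1 := (hLout (ω, hstar ω)).comp ω ((hasFDerivAt_id ω).prodMk hF)
    rw [hasGradientAt_iff_hasFDerivAt]
    refine h1.congr_fderiv ?_
    ext1 x
    have h2 : ⟪dd, S x⟫ = ⟪a, B x⟫ := by
      have hd : dd = - C a := by rw [hCa, neg_neg]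
      have h3 := hsym a (E.symm (B x))
      rw [hEs] at h3
      rw [hd, hS, inner_neg_neg, h3, real_inner_comm]
    simp [inner_add_left, ContinuousLinearMap.adjoint_inner_left, h2, ← hdd]
end
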